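/- If the utility prices are strictly positive, ξ(t) > 0 for all t, then the individual cost minimization problem attains its minimum: there exists an individually feasible triple (b*, r*, s*) such that F(b*, r*) ≤ F(b, r) for every individually feasible triple (b, r, s). -/

import Mathlib

open Finset

/-- Storage recursion: `s 0 = (1-η)·s0 + r 0` and `s t = (1-η)·s (t-1) + r t` for `t ≥ 1`. -/
def StorageRec {T : ℕ} (η s0 : ℝ) (r s : Fin T → ℝ) : Prop :=
  ∀ t : Fin T,
    s t = (1 - η) * (if _h : (t : ℕ) = 0 then s0
      else s ⟨(t : ℕ) - 1, lt_of_le_of_lt (Nat.sub_le _ _) t.isLt⟩) + r t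

/-- Individual feasibility of a triple `(b, r, s)` for household data `(u, w, C, ρ, η, s0)`. -/
def IndivFeasible {T : ℕ} (u w : Fin T → ℝ) (C ρ η s0 : ℝ)
    (b r s : Fin T → ℝ) : Prop :=
  (∀ t, u t - w t - b t + r t ≤ 0) ∧
  (∀ t, 0 ≤ b t) ∧
  (∀ t, |r t| ≤ ρ) ∧
  StorageRec η s0 r s ∧
  (∀ t, 0 ≤ s t ∧ s t ≤ C)

/-- The individual objective `F(b, r)`. -/
noncomputable def indivObj {T : ℕ} (ξ u w : Fin T → ℝ) (π σ : ℝ)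
    (b r : Fin T → ℝ) : ℝ :=
  ∑ t, ξ t * b t + π * ∑ t, |r t| + σ * ∑ t, (b t + w t - u t - r t)

/-- The individual optimal cost: infimum of `F` over individually feasible triples. -/
noncomputable def indivCost {T : ℕ} (ξ u w : Fin T → ℝ) (π σ C ρ η s0 : ℝ) : ℝ :=
  sInf {c : ℝ | ∃ b r s : Fin T → ℝ,
    IndivFeasible u w C ρ η s0 b r s ∧ indivObj ξ u w π σ b r = c}

/-!
For a given storage schedule `(r, s)` it is optimal to buy exactly the shortfall `(u - w + r)⁺`,
because each further unit bought at time `t` costs `ξ t + σ ≥ 0`. Substituting this purchase leaves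
a continuous cost on the compact set of storage schedules, which is nonempty because an idle storage
merely leaks.
-/

section MinPurchase

variable {ι : Type*}

/-- The cheapest purchase compatible with the storage operation `r`: the part of the demand `u` and
the charging `r` that the production `w` does not cover. -/
def minPurchase (u w r : ι → ℝ) : ι → ℝ := (u - w + r)⁺

theorem minPurchase_le_iff {u w r b : ι → ℝ} :
    minPurchase u w r ≤ b ↔ (∀ t, u t - w t - b t + r t ≤ 0) ∧ ∀ t, 0 ≤ b t := by
  have covers_iff (t : ι) : u t - w t + r t ≤ b t ↔ u t - w t - b t + r t ≤ 0 := by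
    constructor <;> intro h <;> linarith
  simp only [minPurchase, posPart_def, sup_le_iff, Pi.le_def, Pi.add_apply, Pi.sub_apply,
    Pi.zero_apply, covers_iff]

theorem continuous_minPurchase (u w : ι → ℝ) : Continuous (minPurchase u w) :=
  continuous_pi fun t => (continuous_const.add (continuous_apply t)).sup continuous_const

end MinPurchase

section StorageSchedules

variable {T : ℕ}

theorem isClosed_setOfPred_storageRec (η s0 : ℝ) :
    IsClosed {p : (Fin T → ℝ) × (Fin T → ℝ) | StorageRec η s0 p.1 p.2} := by
  simp only [StorageRec, Set.ofPred_forall]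
  refine isClosed_iInter fun t => ?_
  split_ifs <;> exact isClosed_eq (by fun_prop) (by fun_prop)

theorem storageRec_zero (η s0 : ℝ) :
    StorageRec η s0 0 fun t : Fin T => (1 - η) ^ ((t : ℕ) + 1) * s0 := by
  rintro ⟨_ | k, hk⟩
  · simp
  · simp [pow_succ', mul_assoc]

/-- The pairs `(r, s)` of a storage operation and the resulting storage levels that respect the
rate `ρ` and the capacity `C`; the part of feasibility that does not involve the purchase. -/
def storageSchedules (T : ℕ) (C ρ η s0 : ℝ) : Set ((Fin T → ℝ) × (Fin T → ℝ)) :=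
  {p | (∀ t, |p.1 t| ≤ ρ) ∧ StorageRec η s0 p.1 p.2 ∧ ∀ t, 0 ≤ p.2 t ∧ p.2 t ≤ C}

theorem storageSchedules_eq (C ρ η s0 : ℝ) :
    storageSchedules T C ρ η s0 =
      Set.Icc (fun _ => -ρ) (fun _ => ρ) ×ˢ Set.Icc 0 (fun _ => C) ∩
        {p | StorageRec η s0 p.1 p.2} := by
  ext p
  simp only [storageSchedules, Set.mem_ofPred_eq, Set.mem_inter_iff, Set.mem_prod, Set.mem_Icc,
    Pi.le_def, Pi.zero_apply, abs_le, forall_and]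
  tauto

theorem isCompact_storageSchedules (C ρ η s0 : ℝ) : IsCompact (storageSchedules T C ρ η s0) := by
  rw [storageSchedules_eq]
  exact (isCompact_Icc.prod isCompact_Icc).inter_right (isClosed_setOfPred_storageRec η s0)

theorem storageSchedules_nonempty {C ρ η s0 : ℝ} (hρ : 0 ≤ ρ) (hη0 : 0 ≤ η) (hη1 : η ≤ 1)
    (hs00 : 0 ≤ s0) (hs0C : s0 ≤ C) : (storageSchedules T C ρ η s0).Nonempty := by
  refine ⟨(0, fun t => (1 - η) ^ ((t : ℕ) + 1) * s0), by simpa using fun _ => hρ,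
    storageRec_zero η s0, fun t => ?_⟩
  have decay_nonneg : 0 ≤ (1 - η) ^ ((t : ℕ) + 1) := pow_nonneg (sub_nonneg.2 hη1) _
  have decay_le_one : (1 - η) ^ ((t : ℕ) + 1) ≤ 1 :=
    pow_le_one₀ (sub_nonneg.2 hη1) (sub_le_self 1 hη0)
  exact ⟨mul_nonneg decay_nonneg hs00, (mul_le_of_le_one_left hs00 decay_le_one).trans hs0C⟩

theorem indivFeasible_iff {u w b r s : Fin T → ℝ} {C ρ η s0 : ℝ} :
    IndivFeasible u w C ρ η s0 b r s ↔
      minPurchase u w r ≤ b ∧ (r, s) ∈ storageSchedules T C ρ η s0 := by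
  rw [minPurchase_le_iff, and_assoc]
  rfl

theorem exists_indivFeasible (u w : Fin T → ℝ) {C ρ η s0 : ℝ} (hρ : 0 ≤ ρ) (hη0 : 0 ≤ η)
    (hη1 : η ≤ 1) (hs00 : 0 ≤ s0) (hs0C : s0 ≤ C) :
    ∃ b r s, IndivFeasible u w C ρ η s0 b r s := by
  obtain ⟨⟨r, s⟩, hrs⟩ := storageSchedules_nonempty (T := T) hρ hη0 hη1 hs00 hs0C
  exact ⟨minPurchase u w r, r, s, indivFeasible_iff.2 ⟨le_rfl, hrs⟩⟩

end StorageSchedules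

section Objective

variable {T : ℕ} (ξ u w : Fin T → ℝ) (π σ : ℝ)

theorem indivObj_eq (b r : Fin T → ℝ) :
    indivObj ξ u w π σ b r =
      ∑ t, (ξ t + σ) * b t + (π * ∑ t, |r t| + σ * ∑ t, (w t - u t - r t)) := by
  simp only [indivObj, Finset.mul_sum, ← Finset.sum_add_distrib]
  exact Finset.sum_congr rfl fun t _ => by ring

variable {ξ σ} in
theorem monotone_indivObj (hξσ : ∀ t, 0 ≤ ξ t + σ) (r : Fin T → ℝ) :
    Monotone fun b => indivObj ξ u w π σ b r := by
  intro b b' hb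
  simp only [indivObj_eq]
  gcongr with t
  exacts [hξσ t, hb t]

theorem continuous_indivObj :
    Continuous fun p : (Fin T → ℝ) × (Fin T → ℝ) => indivObj ξ u w π σ p.1 p.2 := by
  unfold indivObj
  fun_prop

end Objective

theorem indiv_min_attained_general {T : ℕ} {ξ u w : Fin T → ℝ} {C ρ η s0 σ : ℝ} (π : ℝ)
    (hξσ : ∀ t, 0 ≤ ξ t + σ) (hfeas : ∃ b r s, IndivFeasible u w C ρ η s0 b r s) :
    ∃ bstar rstar sstar : Fin T → ℝ,
      IndivFeasible u w C ρ η s0 bstar rstar sstar ∧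
      ∀ b r s : Fin T → ℝ, IndivFeasible u w C ρ η s0 b r s →
        indivObj ξ u w π σ bstar rstar ≤ indivObj ξ u w π σ b r := by
  have nonempty : (storageSchedules T C ρ η s0).Nonempty := by
    obtain ⟨b, r, s, h⟩ := hfeas
    exact ⟨(r, s), (indivFeasible_iff.1 h).2⟩
  have continuous_cost : Continuous fun p : (Fin T → ℝ) × (Fin T → ℝ) =>
      indivObj ξ u w π σ (minPurchase u w p.1) p.1 :=
    (continuous_indivObj ξ u w π σ).comp
      (((continuous_minPurchase u w).comp continuous_fst).prodMk continuous_fst)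
  obtain ⟨⟨rstar, sstar⟩, hstar, hmin⟩ :=
    (isCompact_storageSchedules C ρ η s0).exists_isMinOn nonempty continuous_cost.continuousOn
  refine ⟨minPurchase u w rstar, rstar, sstar, indivFeasible_iff.2 ⟨le_rfl, hstar⟩,
    fun b r s h => ?_⟩
  obtain ⟨hb, hrs⟩ := indivFeasible_iff.1 h
  calc indivObj ξ u w π σ (minPurchase u w rstar) rstar
      ≤ indivObj ξ u w π σ (minPurchase u w r) r := hmin hrs
    _ ≤ indivObj ξ u w π σ b r := monotone_indivObj u w π hξσ r hb

/-- With strictly positive utility prices, the individual cost minimization problem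
attains its minimum. -/
theorem indiv_min_attained {T : ℕ} (hT : 1 ≤ T)
    (ξ u w : Fin T → ℝ) (C ρ η s0 π σ : ℝ)
    (hu : ∀ t, 0 ≤ u t) (hw : ∀ t, 0 ≤ w t)
    (hC : 0 ≤ C) (hρ : 0 ≤ ρ) (hη0 : 0 ≤ η) (hη1 : η ≤ 1)
    (hs00 : 0 ≤ s0) (hs0C : s0 ≤ C)
    (hξ : ∀ t, 0 < ξ t) (hπ : 0 ≤ π) (hσ : 0 ≤ σ) :
    ∃ bstar rstar sstar : Fin T → ℝ,
      IndivFeasible u w C ρ η s0 bstar rstar sstar ∧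
      ∀ b r s : Fin T → ℝ, IndivFeasible u w C ρ η s0 b r s →
        indivObj ξ u w π σ bstar rstar ≤ indivObj ξ u w π σ b r :=
  indiv_min_attained_general π (fun t => add_nonneg (hξ t).le hσ)
    (exists_indivFeasible u w hρ hη0 hη1 hs00 hs0C)
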